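/- The expected waiting time until the pattern A first occurs is E[τ_A] = Σ_{k=1}^{l} [A_(k) = A^(k)] / P(A_(k)). -/

import Mathlib

/-!
Write `G n` for the event `τ > n`, `F n` for `τ = n` and `W n B` for the event that the word `B`
is spelled by the tosses following toss `n`. Since `G n` only depends on the first `n` tosses,
`μ (G n ∩ W n A) = μ (G n) * P(A)` (`measure_inter_spells`). On `G n ∩ W n A` the pattern has
occurred by toss `n + l`, so `τ = n + k` for exactly one `k` with `1 ≤ k ≤ l`; the two occurrences
of `A`, ending at `n + k` and at `n + l`, overlap in `k` letters, which forces `A_(k) = A^(k)`, and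
under this condition `F (n + k) ∩ W n A = F (n + k) ∩ W (n + k) (A.drop k)`
(`firstAt_inter_spells`). Hence
`μ (G n) * P(A) = ∑ k, [A_(k) = A^(k)] * μ (F (n + k)) * P(A.drop k)`.

Summing over `n` in `ℝ≥0∞`, the left side becomes `E[τ] * P(A)`, and on the right
`∑ n, μ (F (n + k)) = P(τ < ∞)`, because `τ ≥ l ≥ k`. The right side is finite and `P(A) > 0`, so
`E[τ] < ∞`; therefore `P(τ < ∞) = 1`, and dividing by `P(A) = P(A_(k)) * P(A.drop k)` gives the
formula.
-/

open MeasureTheory ENNReal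

noncomputable section

/-- Probability of a single toss outcome: `true` (heads) has probability `p`,
`false` (tails) has probability `1 - p`. -/
def letterP (p : ℝ) (b : Bool) : ℝ := if b then p else 1 - p

/-- Probability of a finite string of tosses (`1` for the empty string). -/
def strP (p : ℝ) (A : List Bool) : ℝ := (A.map (letterP p)).prod

/-- `μ` is the product measure on `{H,T}^ℕ` of i.i.d. coin tosses with heads
probability `p`: every cylinder set has the product probability. -/
def IsCoinMeasure (p : ℝ) (μ : Measure (ℕ → Bool)) : Prop :=
  ∀ (n : ℕ) (a : Fin n → Bool),
    μ {ξ | ∀ i : Fin n, ξ i = a i} = ENNReal.ofReal (∏ i, letterP p (a i))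

/-- The pattern `A` (of length `l`) occurs ending exactly at toss `n`
(toss number `k ≥ 1` of `ξ` is `ξ (k - 1)`): `n ≥ l` and tosses
`n - l + 1, …, n` spell `A`. -/
def occursAt (A : List Bool) (ξ : ℕ → Bool) (n : ℕ) : Prop :=
  A.length ≤ n ∧ (List.ofFn fun k : Fin A.length => ξ (n - A.length + k)) = A

/-- The first toss at which the pattern `A` has occurred (`⊤` if it never occurs). -/
def hitTime (A : List Bool) (ξ : ℕ → Bool) : ℕ∞ :=
  ⨅ (n : ℕ) (_ : occursAt A ξ n), (n : ℕ∞)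

/-- The event `E` is determined by the first `n` tosses. -/
def DetBy (n : ℕ) (E : Set (ℕ → Bool)) : Prop :=
  ∀ ξ η : ℕ → Bool, (∀ i < n, ξ i = η i) → ξ ∈ E → η ∈ E

/-- The event that the tosses immediately following the first `n` spell the word `B`. -/
def spells (n : ℕ) (B : List Bool) : Set (ℕ → Bool) :=
  {ξ | ∀ i : Fin B.length, ξ (n + i) = B[i]}

/-- The event `τ_A > n`. -/
def notBy (A : List Bool) (n : ℕ) : Set (ℕ → Bool) :=
  {ξ | ∀ m ≤ n, ¬ occursAt A ξ m}

/-- The event `τ_A = n`. -/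
def firstAt (A : List Bool) (n : ℕ) : Set (ℕ → Bool) :=
  {ξ | occursAt A ξ n ∧ ∀ m < n, ¬ occursAt A ξ m}

lemma occursAt_iff (A : List Bool) (ξ : ℕ → Bool) (n : ℕ) :
    occursAt A ξ n ↔ A.length ≤ n ∧
      ∀ (i : ℕ) (h : i < A.length), ξ (n - A.length + i) = A[i] := by
  unfold occursAt
  refine and_congr_right fun _ => ?_
  constructor
  · intro h i hi
    have := List.getElem_of_eq h (i := i) (by simpa using hi)
    simpa using this
  · intro h
    apply List.ext_getElem (by simp)
    intro i h1 h2
    simpa using h i h2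

lemma letterP_pos {p : ℝ} (hp0 : 0 < p) (hp1 : p < 1) (b : Bool) : 0 < letterP p b := by
  unfold letterP; split <;> linarith

lemma strP_pos {p : ℝ} (hp0 : 0 < p) (hp1 : p < 1) (A : List Bool) : 0 < strP p A := by
  unfold strP
  apply List.prod_pos
  simp only [List.mem_map]
  rintro _ ⟨b, _, rfl⟩
  exact letterP_pos hp0 hp1 b

lemma strP_take_mul_drop (p : ℝ) (A : List Bool) (k : ℕ) :
    strP p (A.take k) * strP p (A.drop k) = strP p A := by
  unfold strP
  rw [← List.prod_append, ← List.map_append, List.take_append_drop]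

lemma strP_eq_prod (p : ℝ) (A : List Bool) :
    strP p A = ∏ i : Fin A.length, letterP p A[i] := by
  unfold strP
  rw [← List.prod_ofFn]
  congr 1
  apply List.ext_getElem <;> simp

/-- An event determined by finitely many tosses is a preimage under the restriction map. -/
lemma DetBy.exists_preimage {n : ℕ} {E : Set (ℕ → Bool)} (hE : DetBy n E) :
    ∃ S : Finset (Fin n → Bool), E = (fun (ξ : ℕ → Bool) (i : Fin n) => ξ i) ⁻¹' S := by
  classical
  refine ⟨Finset.univ.filter fun a => ∃ ξ ∈ E, ∀ i : Fin n, ξ i = a i, ?_⟩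
  ext ξ
  simp only [Set.mem_preimage, Finset.coe_filter, Finset.mem_univ, true_and, Set.mem_ofPred_eq]
  constructor
  · intro h
    exact ⟨ξ, h, fun _ => rfl⟩
  · rintro ⟨η, hη, h⟩
    exact hE η ξ (fun i hi => h ⟨i, hi⟩) hη

lemma measurable_restr (n : ℕ) : Measurable (fun (ξ : ℕ → Bool) (i : Fin n) => ξ i) := by
  fun_prop

lemma DetBy.measurableSet {n : ℕ} {E : Set (ℕ → Bool)} (hE : DetBy n E) : MeasurableSet E := by
  obtain ⟨S, rfl⟩ := hE.exists_preimage
  exact measurable_restr n S.measurableSet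

/-- Tosses after time `n` are independent of events determined by the first `n` tosses. -/
lemma measure_inter_spells {p : ℝ} (hp0 : 0 < p) (hp1 : p < 1) {μ : Measure (ℕ → Bool)}
    (hμ : IsCoinMeasure p μ) {n : ℕ} {E : Set (ℕ → Bool)} (hE : DetBy n E) (B : List Bool) :
    μ (E ∩ spells n B) = μ E * ENNReal.ofReal (strP p B) := by
  have hm := hE.measurableSet
  obtain ⟨S, rfl⟩ := hE.exists_preimage
  have hs : ∀ a ∈ S, MeasurableSet ((fun (ξ : ℕ → Bool) (i : Fin n) => ξ i) ⁻¹' {a}) :=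
    fun a _ => measurable_restr n (measurableSet_singleton a)
  rw [← Measure.restrict_apply hm, ← sum_measure_preimage_singleton S hs,
    ← sum_measure_preimage_singleton S hs, Finset.sum_mul]
  refine Finset.sum_congr rfl fun a ha => ?_
  rw [Measure.restrict_apply (hs a ha)]
  have h1 : (fun (ξ : ℕ → Bool) (i : Fin n) => ξ i) ⁻¹' {a} = {ξ | ∀ i : Fin n, ξ i = a i} := by
    ext ξ; simp [funext_iff]
  have h2 : {ξ : ℕ → Bool | ∀ i : Fin n, ξ i = a i} ∩ spells n B =
      {ξ | ∀ i : Fin (n + B.length), ξ i = Fin.append a (fun i : Fin B.length => B[i]) i} := by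
    ext ξ
    simp only [spells, Set.mem_inter_iff, Set.mem_ofPred_eq]
    constructor
    · rintro ⟨h, h'⟩ i
      induction i using Fin.addCases with
      | left i => simpa using h i
      | right i => simpa using h' i
    · intro h
      exact ⟨fun i => by simpa using h (Fin.castAdd _ i), fun i => by simpa using h (Fin.natAdd _ i)⟩
  rw [h1, h2, hμ, hμ, Fin.prod_univ_add, strP_eq_prod,
    ← ENNReal.ofReal_mul (Finset.prod_nonneg fun i _ => (letterP_pos hp0 hp1 _).le)]
  simp

lemma occursAt_congr {A : List Bool} {ξ η : ℕ → Bool} {n m : ℕ} (hm : m ≤ n)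
    (h : ∀ i < n, ξ i = η i) : occursAt A ξ m ↔ occursAt A η m := by
  rw [occursAt_iff, occursAt_iff]
  refine and_congr_right fun hl => forall_congr' fun i => forall_congr' fun hi => ?_
  rw [h _ (by omega)]

lemma detBy_notBy (A : List Bool) (n : ℕ) : DetBy n (notBy A n) := fun _ _ h hξ m hm ho =>
  hξ m hm ((occursAt_congr hm h).2 ho)

lemma detBy_firstAt (A : List Bool) (n : ℕ) : DetBy n (firstAt A n) := fun _ _ h hξ =>
  ⟨(occursAt_congr le_rfl h).1 hξ.1, fun m hm ho => hξ.2 m hm ((occursAt_congr hm.le h).2 ho)⟩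

lemma measurableSet_spells (n : ℕ) (B : List Bool) : MeasurableSet (spells n B) := by
  refine DetBy.measurableSet (n := n + B.length) fun ξ η h hξ i => ?_
  rw [← h _ (by omega)]
  exact hξ i

lemma firstAt_disjoint (A : List Bool) {m n : ℕ} (h : m ≠ n) :
    Disjoint (firstAt A m) (firstAt A n) := by
  rw [Set.disjoint_left]
  intro ξ h1 h2
  rcases lt_or_gt_of_ne h with h | h
  · exact h2.2 m h h1.1
  · exact h1.2 n h h2.1

/-- An occurrence of `A` ending at toss `n + k` and one starting right after toss `n` overlap in
`k` letters, so they are compatible exactly when the first and last `k` letters of `A` agree. -/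
lemma firstAt_inter_spells (A : List Bool) (n : ℕ) {k : ℕ} (hk : k ≤ A.length) :
    firstAt A (n + k) ∩ spells n A =
      if A.take k = A.drop (A.length - k) then firstAt A (n + k) ∩ spells (n + k) (A.drop k)
      else ∅ := by
  split_ifs with hb
  · ext ξ
    refine and_congr_right fun hf => ?_
    obtain ⟨hl, ho⟩ := (occursAt_iff _ _ _).1 hf.1
    constructor
    · intro h i
      have hi : (i : ℕ) < A.length - k := by simpa using i.2
      have := h ⟨k + i, by omega⟩
      simpa [add_assoc] using this
    · intro h i
      by_cases hik : (i : ℕ) < k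
      · have h1 := ho (A.length - k + i) (by omega)
        have h2 := List.getElem_of_eq hb (i := i) (by simp; omega)
        have h3 : n + k - A.length + (A.length - k + i) = n + i := by omega
        rw [h3] at h1
        simp only [List.getElem_take, List.getElem_drop] at h2
        rw [h1, ← h2]
        rfl
      · have h1 := h ⟨i - k, by simp; omega⟩
        have h3 : n + k + (i - k) = n + i := by omega
        have h4 : k + (i - k) = (i : ℕ) := by omega
        simpa [h3, h4] using h1
  · rw [Set.eq_empty_iff_forall_notMem]
    rintro ξ ⟨hf, h⟩
    obtain ⟨hl, ho⟩ := (occursAt_iff _ _ _).1 hf.1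
    apply hb
    apply List.ext_getElem (by simp; omega)
    intro i h1 h2
    have hik : i < k := by simp at h1; omega
    have h3 := ho (A.length - k + i) (by omega)
    have h4 : n + k - A.length + (A.length - k + i) = n + i := by omega
    have h5 := h ⟨i, by omega⟩
    rw [h4] at h3
    simp only [List.getElem_take, List.getElem_drop]
    rw [← h3]
    exact h5.symm

lemma notBy_inter_spells (A : List Bool) (n : ℕ) :
    notBy A n ∩ spells n A = ⋃ k ∈ Finset.Icc 1 A.length, firstAt A (n + k) ∩ spells n A := by
  classical
  ext ξ
  simp only [Set.mem_iUnion, Finset.mem_Icc, exists_prop, Set.mem_inter_iff]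
  constructor
  · rintro ⟨hn, hs⟩
    have hex : ∃ m, occursAt A ξ m := by
      refine ⟨n + A.length, (occursAt_iff _ _ _).2 ⟨by omega, fun i hi => ?_⟩⟩
      rw [Nat.add_sub_cancel]
      exact hs ⟨i, hi⟩
    have hle : Nat.find hex ≤ n + A.length := by
      refine Nat.find_min' hex ((occursAt_iff _ _ _).2 ⟨by omega, fun i hi => ?_⟩)
      rw [Nat.add_sub_cancel]
      exact hs ⟨i, hi⟩
    have hlt : n < Nat.find hex := by
      by_contra hc
      exact hn _ (not_lt.1 hc) (Nat.find_spec hex)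
    refine ⟨Nat.find hex - n, ⟨by omega, by omega⟩, ?_, hs⟩
    rw [Nat.add_sub_cancel' hlt.le]
    exact ⟨Nat.find_spec hex, fun m hm => Nat.find_min hex hm⟩
  · rintro ⟨k, ⟨hk1, hk2⟩, hf, hs⟩
    exact ⟨fun m hm => hf.2 m (by omega), hs⟩

/-- The renewal identity: `P(τ > n) P(A) = ∑ₖ [A_(k) = A^(k)] P(τ = n + k) P(A.drop k)`. -/
lemma measure_notBy_mul {p : ℝ} (hp0 : 0 < p) (hp1 : p < 1) {μ : Measure (ℕ → Bool)}
    (hμ : IsCoinMeasure p μ) (A : List Bool) (n : ℕ) :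
    μ (notBy A n) * ENNReal.ofReal (strP p A) = ∑ k ∈ Finset.Icc 1 A.length,
      (if A.take k = A.drop (A.length - k) then ENNReal.ofReal (strP p (A.drop k)) else 0) *
        μ (firstAt A (n + k)) := by
  rw [← measure_inter_spells hp0 hp1 hμ (detBy_notBy A n), notBy_inter_spells,
    measure_biUnion_finset]
  · refine Finset.sum_congr rfl fun k hk => ?_
    rw [firstAt_inter_spells A n (Finset.mem_Icc.1 hk).2]
    split_ifs
    · rw [measure_inter_spells hp0 hp1 hμ (detBy_firstAt A _), mul_comm]
    · simp
  · intro i _ j _ hij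
    exact (firstAt_disjoint A (by omega)).mono Set.inter_subset_left Set.inter_subset_left
  · intro k _
    exact (detBy_firstAt A _).measurableSet.inter (measurableSet_spells n A)

/-- For `k ≤ l` the sum `∑ₙ P(τ = n + k)` misses nothing, since `τ ≥ l`. -/
lemma tsum_measure_firstAt (μ : Measure (ℕ → Bool)) (A : List Bool) {k : ℕ}
    (hk : k ≤ A.length) :
    ∑' n, μ (firstAt A (n + k)) = μ {ξ | ∃ m, occursAt A ξ m} := by
  classical
  rw [← measure_iUnion (fun i j hij => firstAt_disjoint A (by omega))
    (fun n => (detBy_firstAt A _).measurableSet)]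
  congr 1
  ext ξ
  simp only [Set.mem_iUnion, Set.mem_ofPred_eq]
  constructor
  · rintro ⟨n, hn⟩
    exact ⟨_, hn.1⟩
  · intro hex
    have hl := (Nat.find_spec hex).1
    refine ⟨Nat.find hex - k, ?_⟩
    rw [Nat.sub_add_cancel (hk.trans hl)]
    exact ⟨Nat.find_spec hex, fun m hm => Nat.find_min hex hm⟩

lemma lt_hitTime_iff (A : List Bool) (ξ : ℕ → Bool) (n : ℕ) :
    (n : ℕ∞) < hitTime A ξ ↔ ξ ∈ notBy A n := by
  constructor
  · intro h m hm ho
    have h1 : hitTime A ξ ≤ m := iInf₂_le m ho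
    exact absurd (h.trans_le h1) (not_lt.2 (by exact_mod_cast hm))
  · intro h
    have h1 : ((n + 1 : ℕ) : ℕ∞) ≤ hitTime A ξ := by
      refine le_iInf₂ fun m ho => ?_
      have : n + 1 ≤ m := by
        by_contra hc
        exact h m (by omega) ho
      exact_mod_cast this
    exact lt_of_lt_of_le (by exact_mod_cast Nat.lt_succ_self n) h1

lemma enat_eq_tsum (x : ℕ∞) :
    (x : ℝ≥0∞) = ∑' n : ℕ, if (n : ℕ∞) < x then (1 : ℝ≥0∞) else 0 := by
  induction x using ENat.recTopCoe with
  | top => simp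
  | coe N =>
    rw [tsum_eq_sum (s := Finset.range N)]
    · rw [Finset.sum_congr rfl (g := fun _ => (1 : ℝ≥0∞))]
      · simp
      · intro n hn
        simpa using hn
    · intro n hn
      simpa using hn

/-- The tail-sum formula `E[τ] = ∑ₙ P(τ > n)`. -/
lemma lintegral_hitTime (μ : Measure (ℕ → Bool)) (A : List Bool) :
    ∫⁻ ξ, ((hitTime A ξ : ℕ∞) : ℝ≥0∞) ∂μ = ∑' n, μ (notBy A n) := by
  have h : ∀ ξ, ((hitTime A ξ : ℕ∞) : ℝ≥0∞) = ∑' n, (notBy A n).indicator 1 ξ := by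
    intro ξ
    rw [enat_eq_tsum]
    refine tsum_congr fun n => ?_
    classical
    simp only [lt_hitTime_iff, Set.indicator_apply, Pi.one_apply]
  simp_rw [h]
  rw [lintegral_tsum]
  · exact tsum_congr fun n => lintegral_indicator_one (detBy_notBy A n).measurableSet
  · exact fun n => (measurable_one.indicator (detBy_notBy A n).measurableSet).aemeasurable

/-- The expected waiting time until the pattern `A` first occurs
is `E[τ_A] = Σ_{k=1}^{l} [A_(k) = A^(k)] / P(A_(k))`. -/
theorem expected_hitTime (p : ℝ) (hp0 : 0 < p) (hp1 : p < 1)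
    (μ : Measure (ℕ → Bool)) [IsProbabilityMeasure μ] (hμ : IsCoinMeasure p μ)
    (A : List Bool) (hA : 1 ≤ A.length) :
    ∫⁻ ξ, ((hitTime A ξ : ℕ∞) : ℝ≥0∞) ∂μ =
      ENNReal.ofReal (∑ k ∈ Finset.Icc 1 A.length,
        (if A.take k = A.drop (A.length - k) then (1 : ℝ) else 0) /
          strP p (A.take k)) := by
  have hP := strP_pos hp0 hp1 A
  have key : (∑' n, μ (notBy A n)) * ENNReal.ofReal (strP p A) =
      (∑ k ∈ Finset.Icc 1 A.length,
        if A.take k = A.drop (A.length - k) then ENNReal.ofReal (strP p (A.drop k)) else 0) *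
        μ {ξ | ∃ m, occursAt A ξ m} := by
    rw [← ENNReal.tsum_mul_right, Finset.sum_mul]
    simp_rw [measure_notBy_mul hp0 hp1 hμ]
    rw [Summable.tsum_finsetSum fun _ _ => ENNReal.summable]
    refine Finset.sum_congr rfl fun k hk => ?_
    rw [ENNReal.tsum_mul_left, tsum_measure_firstAt μ A (Finset.mem_Icc.1 hk).2]
  have hP0 : ENNReal.ofReal (strP p A) ≠ 0 := by simpa using hP
  have hfin : ∑' n, μ (notBy A n) ≠ ⊤ := by
    intro htop
    rw [htop, ENNReal.top_mul hP0] at key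
    refine ENNReal.mul_ne_top ?_ (measure_ne_top μ _) key.symm
    refine ENNReal.sum_ne_top.2 fun k _ => ?_
    split_ifs <;> simp
  -- `P(τ = ∞) ≤ P(τ > n)` for every `n`, and the right-hand sides have a finite sum.
  have hnull : μ {ξ | ∃ m, occursAt A ξ m}ᶜ = 0 := by
    by_contra hne
    refine hfin (top_le_iff.1 ?_)
    rw [← ENNReal.tsum_const_eq_top_of_ne_zero (α := ℕ) hne]
    refine ENNReal.tsum_le_tsum fun n => measure_mono fun ξ hξ m _ ho => hξ ⟨m, ho⟩
  have hone : μ {ξ | ∃ m, occursAt A ξ m} = 1 := by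
    have h := measure_congr (μ := μ) (ae_eq_univ.2 hnull)
    rw [h, measure_univ]
  rw [lintegral_hitTime, ← ENNReal.mul_left_inj hP0 ENNReal.ofReal_ne_top, key, hone, mul_one,
    ← ENNReal.ofReal_mul' hP.le, Finset.sum_mul, ENNReal.ofReal_sum_of_nonneg]
  · refine Finset.sum_congr rfl fun k _ => ?_
    split_ifs
    · rw [← strP_take_mul_drop p A k, one_div, inv_mul_cancel_left₀ (strP_pos hp0 hp1 _).ne']
    · simp
  · intro k _
    have := strP_pos hp0 hp1 (A.take k)
    split_ifs <;> positivity
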